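/- Consider M nodes, each node v having a convex, differentiable, L-smooth function f_v : ℝ^m → ℝ and a nonempty closed convex set S_v ⊆ ℝ^m. Let W = [w_{vu}] be an M×M real matrix with zero row sums, let μ > 0 and η > 0, let x* ∈ ∩_v S_v, and let n^v ∈ ∂I_{S_v}(x*) with Σ_{v=1}^M (n^v + ∇f_v(x*)) = 0. Suppose that for every n ≥ 0 and every v: z_n^v = x_n^v − Σ_{u=1}^M w_{vu} x_n^u − μ(∇f_v(x_n^v) − g_n^v) and x_{n+1}^v = P_{S_v}(z_n^v), where (g_n^v) are arbitrary vectors in ℝ^m. With x̃_n^v := x_n^v − x* and g̃_n^v := g_n^v − ∇f_v(x*) − n^v, define for each N ≥ 1: A_N := −Σ_{n=0}^{N−1} [ Σ_v ⟨x̃_{n+1}^v, x̃_n^v − Σ_u w_{vu} x̃_n^u − x̃_{n+1}^v + μ g̃_n^v⟩ + (Lμ/2) Σ_v ‖x̃_{n+1}^v − x̃_n^v‖² + (η/2) Σ_{u,v} ‖x̃_{n+1}^u − x̃_{n+1}^v‖² ]. Assume there exists C ≥ 0 such that A_N ≥ −C for all N ≥ 1. Then, with x̄^v_N := (1/N) Σ_{n=1}^N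 x_n^v and x̄_N := (1/M) Σ_v x̄^v_N, for every N ≥ 1 and every v: (a) ‖x̄_N − x̄^v_N‖² ≤ C/(ηMN); (b) dist(x̄_N, S_v)² ≤ C/(ηMN); and (c) | Σ_v f_v(x̄^v_N) − Σ_v f_v(x*) | ≤ C/(μN) + sqrt( Σ_v ‖n^v + ∇f_v(x*)‖² ) · sqrt( C/(ηMN) ). -/

import Mathlib

open scoped InnerProductSpace

/-!
Write `p_v = n^v + ∇f_v(x*)` and let `φ_v(w) = f_v(w) - f_v(x*) - ⟨p_v, w - x*⟩`. Each `φ_v` is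
convex, and it is nonnegative on `S_v` by the gradient inequality at `x*` and the normal-cone
condition (`gap_nonneg`).

Testing the projection inequality with `y = x*`, and bounding `⟨∇f_v(x_n), x_{n+1} - x*⟩` from below
by convexity together with the descent lemma, shows that each summand of `-A_N` dominates
`μ ∑_v φ_v(x_{n+1}^v) + (η/2) ∑_{u,v} ‖x_{n+1}^u - x_{n+1}^v‖²` (`gap_le_step`). Summing over `n`
and applying Jensen's inequality, the averages satisfy
`N (μ ∑_v φ_v(x̄^v) + (η/2) ∑_{u,v} ‖x̄^u - x̄^v‖²) ≤ C`.

Both terms are nonnegative. The second one and the identity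
`∑_{u,v} ‖x̄^u - x̄^v‖² = 2M ∑_v ‖x̄ - x̄^v‖²` give `∑_v ‖x̄ - x̄^v‖² ≤ C/(ηMN)`, hence (a), and (b)
because `x̄^v ∈ S_v`. The first one gives `0 ≤ ∑_v φ_v(x̄^v) ≤ C/(μN)`; the remaining linear term
equals `∑_v ⟨p_v, x̄^v - x̄⟩` because `∑_v p_v = 0`, and Cauchy–Schwarz yields (c).
-/

section Helpers

variable {E : Type*} [NormedAddCommGroup E] [InnerProductSpace ℝ E]

lemma hasDerivAt_along_line [CompleteSpace E] {f : E → ℝ} {f' : E → E}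
    (hdiff : ∀ w, HasGradientAt f (f' w) w) (a d : E) (t : ℝ) :
    HasDerivAt (fun s : ℝ => f (a + s • d)) ⟪f' (a + t • d), d⟫_ℝ t := by
  have h1 : HasDerivAt (fun s : ℝ => a + s • d) d t := by
    simpa using ((hasDerivAt_id t).smul_const d).const_add a
  have h2 := (hdiff (a + t • d)).hasFDerivAt.comp_hasDerivAt t h1
  exact h2.congr_deriv (by simp)

lemma gradient_inequality [CompleteSpace E] {f : E → ℝ} {f' : E → E}
    (hconv : ConvexOn ℝ Set.univ f) (hdiff : ∀ w, HasGradientAt f (f' w) w) (a b : E) :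
    f a + ⟪f' a, b - a⟫_ℝ ≤ f b := by
  have hc : ConvexOn ℝ Set.univ (fun s : ℝ => f (a + s • (b - a))) := by
    have := hconv.comp_affineMap (AffineMap.lineMap a b : ℝ →ᵃ[ℝ] E)
    simpa [Function.comp_def, AffineMap.lineMap_apply, add_comm] using this
  have h := hc.le_slope_of_hasDerivAt (Set.mem_univ 0) (Set.mem_univ 1) zero_lt_one
    (hasDerivAt_along_line hdiff a (b - a) 0)
  simp [slope_def_field] at h
  linarith

/-- The quadratic upper bound for a function with `L`-Lipschitz gradient. -/
lemma descent_lemma [CompleteSpace E] {f : E → ℝ} {f' : E → E} {L : ℝ}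
    (hdiff : ∀ w, HasGradientAt f (f' w) w)
    (hLip : ∀ w w', ‖f' w - f' w'‖ ≤ L * ‖w - w'‖) (a b : E) :
    f b ≤ f a + ⟪f' a, b - a⟫_ℝ + L / 2 * ‖b - a‖ ^ 2 := by
  set d := b - a with hd
  -- The defect along the segment has nonpositive derivative, so it decreases from `0` to `1`.
  have hder : ∀ t : ℝ, HasDerivAt
      (fun s : ℝ => f (a + s • d) - s * ⟪f' a, d⟫_ℝ - L / 2 * ‖d‖ ^ 2 * s ^ 2)
      (⟪f' (a + t • d), d⟫_ℝ - ⟪f' a, d⟫_ℝ - L * ‖d‖ ^ 2 * t) t := by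
    intro t
    have h := ((hasDerivAt_along_line hdiff a d t).sub
      ((hasDerivAt_id t).mul_const ⟪f' a, d⟫_ℝ)).sub
      (((hasDerivAt_id t).pow 2).const_mul (L / 2 * ‖d‖ ^ 2))
    refine h.congr_deriv ?_
    simp only [id_eq, one_mul, mul_one, Nat.cast_ofNat]
    ring
  have hanti := antitoneOn_of_hasDerivWithinAt_nonpos (convex_Icc (0 : ℝ) 1)
    (fun t _ => (hder t).continuousAt.continuousWithinAt)
    (fun t _ => (hder t).hasDerivWithinAt)
    (by
      intro t ht
      rw [interior_Icc] at ht
      have h1 := real_inner_le_norm (f' (a + t • d) - f' a) d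
      have h2 := hLip (a + t • d) a
      have h3 : ‖a + t • d - a‖ = t * ‖d‖ := by
        rw [add_sub_cancel_left, norm_smul, Real.norm_of_nonneg ht.1.le]
      rw [h3] at h2
      rw [inner_sub_left] at h1
      nlinarith [norm_nonneg d])
  have h := hanti (Set.left_mem_Icc.2 zero_le_one) (Set.right_mem_Icc.2 zero_le_one) zero_le_one
  have hab : a + d = b := by simp [hd]
  simp [hab] at h
  linarith

lemma gap_nonneg [CompleteSpace E] {f : E → ℝ} {f' : E → E} {xs ν y : E}
    (hconv : ConvexOn ℝ Set.univ f) (hdiff : ∀ w, HasGradientAt f (f' w) w)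
    (hν : ⟪ν, y - xs⟫_ℝ ≤ 0) :
    0 ≤ f y - f xs - ⟪ν + f' xs, y - xs⟫_ℝ := by
  have := gradient_inequality hconv hdiff xs y
  rw [inner_add_left]
  linarith

/-- One step at one node: `a`, `y` are consecutive iterates, `r` is the part of the step coming from
the matrix `W`, and `hproj` is the projection inequality tested at `xs`. -/
lemma gap_le_step [CompleteSpace E] {f : E → ℝ} {f' : E → E} {L μ : ℝ} (hμ : 0 < μ)
    (hconv : ConvexOn ℝ Set.univ f) (hdiff : ∀ w, HasGradientAt f (f' w) w)
    (hLip : ∀ w w', ‖f' w - f' w'‖ ≤ L * ‖w - w'‖) {a y r g xs ν : E}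
    (hproj : ⟪xs - y, a - r - μ • (f' a - g) - y⟫_ℝ ≤ 0) :
    μ * (f y - f xs - ⟪ν + f' xs, y - xs⟫_ℝ) ≤
      ⟪y - xs, (a - xs) - r - (y - xs) + μ • (g - f' xs - ν)⟫_ℝ
        + L * μ / 2 * ‖(y - xs) - (a - xs)‖ ^ 2 := by
  have hsplit : (a - xs) - r - (y - xs) + μ • (g - f' xs - ν)
      = (a - r - μ • (f' a - g) - y) + μ • (f' a - (ν + f' xs)) := by module
  have hneg : xs - y = -(y - xs) := by abel
  rw [hneg, inner_neg_left] at hproj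
  have h1 := gradient_inequality hconv hdiff a xs
  have h2 := descent_lemma hdiff hLip a y
  have h3 : ⟪f' a, y - xs⟫_ℝ = ⟪f' a, y - a⟫_ℝ - ⟪f' a, xs - a⟫_ℝ := by
    rw [← inner_sub_right]; congr 1; abel
  have h4 : ⟪y - xs, f' a - (ν + f' xs)⟫_ℝ = ⟪f' a, y - xs⟫_ℝ - ⟪ν + f' xs, y - xs⟫_ℝ := by
    rw [real_inner_comm, inner_sub_left]
  rw [hsplit, inner_add_right, real_inner_smul_right, h4, sub_sub_sub_cancel_right]
  have h5 : μ * (f y - f xs) ≤ μ * (⟪f' a, y - xs⟫_ℝ + L / 2 * ‖y - a‖ ^ 2) :=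
    mul_le_mul_of_nonneg_left (by linarith) hμ.le
  linarith

/-- Jensen's inequality for a uniform average. -/
lemma mul_map_average_le {φ : E → ℝ} (hφ : ConvexOn ℝ Set.univ φ) {N : ℕ} (hN : 1 ≤ N)
    (a : ℕ → E) :
    N * φ ((N : ℝ)⁻¹ • ∑ n ∈ Finset.range N, a n) ≤ ∑ n ∈ Finset.range N, φ (a n) := by
  have hN0 : (0 : ℝ) < N := by exact_mod_cast hN
  have h := hφ.map_sum_le (t := Finset.range N) (w := fun _ => (N : ℝ)⁻¹) (p := a)
    (fun _ _ => by positivity) (by simp [hN0.ne']) (fun _ _ => Set.mem_univ _)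
  rw [← Finset.smul_sum, ← Finset.smul_sum, smul_eq_mul] at h
  calc _ ≤ (N : ℝ) * ((N : ℝ)⁻¹ * ∑ n ∈ Finset.range N, φ (a n)) := by gcongr
    _ = _ := by field_simp

lemma sum_sum_norm_sub_sq {M : ℕ} (hM : 0 < M) (a : Fin M → E) :
    ∑ u, ∑ v, ‖a u - a v‖ ^ 2 = 2 * M * ∑ v, ‖(M : ℝ)⁻¹ • (∑ u, a u) - a v‖ ^ 2 := by
  have hM0 : (M : ℝ) ≠ 0 := by exact_mod_cast hM.ne'
  set c := (M : ℝ)⁻¹ • ∑ u, a u with hc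
  have hzero : ∑ v, (c - a v) = 0 := by
    rw [Finset.sum_sub_distrib, Finset.sum_const, Finset.card_univ, Fintype.card_fin, hc,
      ← Nat.cast_smul_eq_nsmul ℝ, smul_inv_smul₀ hM0, sub_self]
  have hterm : ∀ u v, ‖a u - a v‖ ^ 2
      = ‖c - a u‖ ^ 2 + ‖c - a v‖ ^ 2 - 2 * ⟪c - a v, c - a u⟫_ℝ := by
    intro u v
    rw [show a u - a v = (c - a v) - (c - a u) by abel, norm_sub_sq_real]
    ring
  simp only [hterm, Finset.sum_add_distrib, Finset.sum_sub_distrib, ← Finset.mul_sum,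
    ← sum_inner, hzero, inner_zero_left]
  simp [← Finset.mul_sum]
  ring

/-- Cauchy–Schwarz for a weighted sum whose weights have zero sum: only deviations from an arbitrary
centre `c` matter. -/
lemma abs_sum_inner_le {M : ℕ} (p a : Fin M → E) (hp : ∑ v, p v = 0) (b c : E) :
    |∑ v, ⟪p v, a v - b⟫_ℝ| ≤
      Real.sqrt (∑ v, ‖p v‖ ^ 2) * Real.sqrt (∑ v, ‖c - a v‖ ^ 2) := by
  have h : ∑ v, ⟪p v, a v - b⟫_ℝ = ∑ v, ⟪p v, a v - c⟫_ℝ := by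
    rw [← sub_eq_zero, ← Finset.sum_sub_distrib]
    simp only [← inner_sub_right, sub_sub_sub_cancel_left]
    rw [← sum_inner, hp, inner_zero_left]
  rw [h]
  calc _ ≤ ∑ v, |⟪p v, a v - c⟫_ℝ| := Finset.abs_sum_le_sum_abs _ _
    _ ≤ ∑ v, ‖p v‖ * ‖c - a v‖ := Finset.sum_le_sum fun v _ => by
        rw [norm_sub_rev c]; exact abs_real_inner_le_norm _ _
    _ ≤ _ := Real.sum_mul_le_sqrt_mul_sqrt _ _ _

end Helpers

/-- Theorem 2 of the paper, in the quantitative form established by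
its proof.  Under convexity and `L`-smoothness of the local functions, the DAGP
update-and-projection dynamics, the optimality certificate
`∑_v (n^v + ∇f_v(x*)) = 0`, and the lower bound `A_N ≥ -C` on the trailing quadratic
terms of the master inequality, the averaged iterates
`x̄^v_N = (1/N) ∑_{n=1}^N x_n^v`, `x̄_N = (1/M) ∑_v x̄^v_N` satisfy the `O(1/N)`
consensus and feasibility rates and the `O(1/√N)` objective rate. -/
theorem dagp_rate_theorem (m M : ℕ) (hM : 0 < M)
    (f : Fin M → EuclideanSpace ℝ (Fin m) → ℝ)
    (f' : Fin M → EuclideanSpace ℝ (Fin m) → EuclideanSpace ℝ (Fin m))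
    (hconv : ∀ v, ConvexOn ℝ Set.univ (f v))
    (hdiff : ∀ v w, HasGradientAt (f v) (f' v w) w)
    (L : ℝ) (hLip : ∀ v w w', ‖f' v w - f' v w'‖ ≤ L * ‖w - w'‖)
    (S : Fin M → Set (EuclideanSpace ℝ (Fin m)))
    (hSne : ∀ v, (S v).Nonempty) (hScl : ∀ v, IsClosed (S v))
    (hScv : ∀ v, Convex ℝ (S v))
    (W : Matrix (Fin M) (Fin M) ℝ) (hWrow : ∀ v, ∑ u, W v u = 0)
    (μ η : ℝ) (hμ : 0 < μ) (hη : 0 < η)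
    (xstar : EuclideanSpace ℝ (Fin m)) (hxstar : ∀ v, xstar ∈ S v)
    (nv : Fin M → EuclideanSpace ℝ (Fin m))
    (hnv : ∀ v, ∀ y ∈ S v, ⟪nv v, y - xstar⟫_ℝ ≤ 0)
    (hopt : ∑ v, (nv v + f' v xstar) = 0)
    (x g z : ℕ → Fin M → EuclideanSpace ℝ (Fin m))
    (hz : ∀ n v, z n v = x n v - (∑ u, W v u • x n u) - μ • (f' v (x n v) - g n v))
    -- `x_{n+1}^v = P_{S_v}(z_n^v)`, via the projection variational characterization
    (hxS : ∀ n v, x (n + 1) v ∈ S v)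
    (hproj : ∀ n v, ∀ y ∈ S v, ⟪y - x (n + 1) v, z n v - x (n + 1) v⟫_ℝ ≤ 0)
    (C : ℝ) (hC : 0 ≤ C)
    -- the bound `A_N ≥ -C` for all `N ≥ 1`
    (hA : ∀ N : ℕ, 1 ≤ N →
      -C ≤ -(∑ n ∈ Finset.range N,
          ((∑ v, ⟪x (n + 1) v - xstar,
                (x n v - xstar) - (∑ u, W v u • (x n u - xstar))
                  - (x (n + 1) v - xstar)
                  + μ • (g n v - f' v xstar - nv v)⟫_ℝ)
            + L * μ / 2 * ∑ v, ‖(x (n + 1) v - xstar) - (x n v - xstar)‖ ^ 2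
            + η / 2 * ∑ u, ∑ v,
                ‖(x (n + 1) u - xstar) - (x (n + 1) v - xstar)‖ ^ 2))) :
    ∀ N : ℕ, 1 ≤ N → ∀ v,
      -- (a) consensus rate
      ‖(M : ℝ)⁻¹ • (∑ u, (N : ℝ)⁻¹ • ∑ n ∈ Finset.Icc 1 N, x n u)
          - (N : ℝ)⁻¹ • ∑ n ∈ Finset.Icc 1 N, x n v‖ ^ 2 ≤ C / (η * M * N) ∧
      -- (b) feasibility rate
      Metric.infDist ((M : ℝ)⁻¹ • ∑ u, (N : ℝ)⁻¹ • ∑ n ∈ Finset.Icc 1 N, x n u)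
          (S v) ^ 2 ≤ C / (η * M * N) ∧
      -- (c) objective rate
      |∑ u, f u ((N : ℝ)⁻¹ • ∑ n ∈ Finset.Icc 1 N, x n u) - ∑ u, f u xstar| ≤
        C / (μ * N) + Real.sqrt (∑ u, ‖nv u + f' u xstar‖ ^ 2) *
          Real.sqrt (C / (η * M * N)) := by
  intro N hN
  have hN0 : (0 : ℝ) < N := by exact_mod_cast hN
  have hM0 : (0 : ℝ) < M := by exact_mod_cast hM
  have hIcc : ∀ u, ∑ n ∈ Finset.Icc 1 N, x n u = ∑ n ∈ Finset.range N, x (n + 1) u := by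
    intro u
    rw [Finset.range_eq_Ico, Finset.sum_Ico_add' (fun n => x n u) 0 N 1]
    rfl
  simp only [hIcc]
  set xb : Fin M → EuclideanSpace ℝ (Fin m) :=
    fun u => (N : ℝ)⁻¹ • ∑ n ∈ Finset.range N, x (n + 1) u with hxb
  set c := (M : ℝ)⁻¹ • ∑ u, xb u with hc
  set φ : Fin M → EuclideanSpace ℝ (Fin m) → ℝ :=
    fun u w => f u w - f u xstar - ⟪nv u + f' u xstar, w - xstar⟫_ℝ with hφ
  have hxbS : ∀ u, xb u ∈ S u := by
    intro u
    rw [hxb]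
    simp only [Finset.smul_sum]
    exact (hScv u).sum_mem (fun _ _ => by positivity) (by simp [hN0.ne']) (fun n _ => hxS n u)
  have hφnn : ∀ u, 0 ≤ φ u (xb u) := fun u =>
    gap_nonneg (hconv u) (hdiff u) (hnv u _ (hxbS u))
  have hφconv : ∀ u, ConvexOn ℝ Set.univ (φ u) := by
    intro u
    refine ⟨convex_univ, fun a ha b hb s t hs ht hst => ?_⟩
    have hcomb : s • a + t • b - xstar = s • (a - xstar) + t • (b - xstar) := by
      have h : xstar = (s + t) • xstar := by rw [hst, one_smul]
      nth_rw 1 [h]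
      module
    have h := (hconv u).2 ha hb hs ht hst
    simp only [hφ, hcomb, inner_add_right (nv u + f' u xstar), real_inner_smul_right,
      smul_eq_mul] at h ⊢
    have hconst : f u xstar = s * f u xstar + t * f u xstar := by rw [← add_mul, hst, one_mul]
    linarith
  have hpair : ∀ u v : Fin M, N * ‖xb u - xb v‖ ^ 2
      ≤ ∑ n ∈ Finset.range N, ‖x (n + 1) u - x (n + 1) v‖ ^ 2 := by
    intro u v
    have h := mul_map_average_le
      ((convexOn_univ_norm (E := EuclideanSpace ℝ (Fin m))).pow (fun _ _ => norm_nonneg _) 2) hN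
      (fun n => x (n + 1) u - x (n + 1) v)
    rw [Finset.sum_sub_distrib, smul_sub] at h
    exact h
  have hstep : ∀ n v, μ * φ v (x (n + 1) v) ≤
      ⟪x (n + 1) v - xstar, (x n v - xstar) - (∑ u, W v u • (x n u - xstar))
          - (x (n + 1) v - xstar) + μ • (g n v - f' v xstar - nv v)⟫_ℝ
        + L * μ / 2 * ‖(x (n + 1) v - xstar) - (x n v - xstar)‖ ^ 2 := by
    intro n v
    -- Zero row sums make the mixing term invariant under translation by `xstar`.
    have hW : ∑ u, W v u • (x n u - xstar) = ∑ u, W v u • x n u := by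
      simp only [smul_sub, Finset.sum_sub_distrib]
      rw [← Finset.sum_smul, hWrow, zero_smul, sub_zero]
    have h := hproj n v xstar (hxstar v)
    rw [hz] at h
    rw [hW]
    exact gap_le_step hμ (hconv v) (hdiff v) (hLip v) h
  have hsum : ∑ n ∈ Finset.range N, (μ * ∑ v, φ v (x (n + 1) v)
      + η / 2 * ∑ u, ∑ v, ‖x (n + 1) u - x (n + 1) v‖ ^ 2) ≤ C := by
    refine le_trans (Finset.sum_le_sum fun n _ => ?_) (neg_le_neg_iff.1 (hA N hN))
    simp only [sub_sub_sub_cancel_right]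
    have h := Finset.sum_le_sum fun v (_ : v ∈ Finset.univ) => hstep n v
    simp only [sub_sub_sub_cancel_right, Finset.sum_add_distrib, ← Finset.mul_sum] at h
    linarith
  have hmain : N * (μ * ∑ v, φ v (xb v) + η / 2 * ∑ u, ∑ v, ‖xb u - xb v‖ ^ 2) ≤ C := by
    refine le_trans ?_ hsum
    rw [Finset.sum_add_distrib, ← Finset.mul_sum, ← Finset.mul_sum, mul_add]
    have h1 : N * ∑ v, φ v (xb v) ≤ ∑ n ∈ Finset.range N, ∑ v, φ v (x (n + 1) v) := by
      rw [Finset.sum_comm, Finset.mul_sum]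
      exact Finset.sum_le_sum fun v _ => mul_map_average_le (hφconv v) hN (fun n => x (n + 1) v)
    have h2 : N * ∑ u, ∑ v, ‖xb u - xb v‖ ^ 2
        ≤ ∑ n ∈ Finset.range N, ∑ u, ∑ v, ‖x (n + 1) u - x (n + 1) v‖ ^ 2 := by
      rw [Finset.sum_comm (s := Finset.range N), Finset.mul_sum]
      refine Finset.sum_le_sum fun u _ => ?_
      rw [Finset.sum_comm (s := Finset.range N), Finset.mul_sum]
      exact Finset.sum_le_sum fun v _ => hpair u v
    have h3 := mul_le_mul_of_nonneg_left h1 hμ.le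
    have h4 := mul_le_mul_of_nonneg_left h2 (half_pos hη).le
    linarith
  rw [sum_sum_norm_sub_sq hM, ← hc] at hmain
  have hφ0 : 0 ≤ ∑ v, φ v (xb v) := Finset.sum_nonneg fun v _ => hφnn v
  have hdev0 : 0 ≤ ∑ v, ‖c - xb v‖ ^ 2 := by positivity
  have hdev : ∑ v, ‖c - xb v‖ ^ 2 ≤ C / (η * M * N) := by
    rw [le_div_iff₀ (by positivity)]
    have : 0 ≤ N * (μ * ∑ v, φ v (xb v)) := by positivity
    linarith
  have hgap : ∑ v, φ v (xb v) ≤ C / (μ * N) := by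
    rw [le_div_iff₀ (by positivity)]
    have : 0 ≤ N * (η / 2 * (2 * M * ∑ v, ‖c - xb v‖ ^ 2)) := by positivity
    linarith
  intro v
  have ha : ‖c - xb v‖ ^ 2 ≤ C / (η * M * N) :=
    (Finset.single_le_sum (f := fun v => ‖c - xb v‖ ^ 2) (fun _ _ => by positivity)
      (Finset.mem_univ v)).trans hdev
  refine ⟨ha, ?_, ?_⟩
  · refine le_trans ?_ ha
    have h := Metric.infDist_le_dist_of_mem (x := c) (hxbS v)
    rw [dist_eq_norm] at h
    exact pow_le_pow_left₀ Metric.infDist_nonneg h 2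
  · have hlin := (abs_sum_inner_le _ xb hopt xstar c).trans
      (mul_le_mul_of_nonneg_left (Real.sqrt_le_sqrt hdev) (Real.sqrt_nonneg _))
    have hsplit : ∑ u, f u (xb u) - ∑ u, f u xstar
        = ∑ u, φ u (xb u) + ∑ u, ⟪nv u + f' u xstar, xb u - xstar⟫_ℝ := by
      simp only [hφ, Finset.sum_sub_distrib]
      ring
    rw [hsplit]
    refine (abs_add_le _ _).trans (add_le_add ?_ hlin)
    rwa [abs_of_nonneg hφ0]
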